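/- Let M = (X, I) be a matroid on |X| = n elements, let k be an integer with 1 ≤ k < rk(M), and let ω : X → ℝ_{>0} be a weight function. Then I_ω(k)² = (1 + 1/k)·(1 + 1/(n − k))·I_ω(k−1)·I_ω(k+1) if and only if every subset of X of size k+1 is independent (equivalently, girth(M) > k+1) and the weight function ω is uniform. -/

import Mathlib

open scoped Classical BigOperators

noncomputable section

variable {X : Type*} [Fintype X] [DecidableEq X]

/-- The number of independent sets of size `k` of the set system `Indep`. -/
def numIndep (Indep : Finset X → Prop) (k : ℕ) : ℕ :=
  (Finset.univ.filter (fun S : Finset X => Indep S ∧ S.card = k)).card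

/-- The weighted count of independent sets of size `k`:
`I_ω(k) = Σ_{S ∈ I, |S| = k} Π_{x ∈ S} ω(x)`. -/
def wNumIndep (Indep : Finset X → Prop) (ω : X → ℝ) (k : ℕ) : ℝ :=
  ∑ S ∈ Finset.univ.filter (fun S : Finset X => Indep S ∧ S.card = k), ∏ x ∈ S, ω x

/-- The rank of a matroid: the maximal size of an independent set. -/
def matroidRk (Indep : Finset X → Prop) : ℕ :=
  Finset.univ.sup (fun S : Finset X => if Indep S then S.card else 0)

/-- The set of continuations of an independent set `S`. -/
def mCont (Indep : Finset X → Prop) (S : Finset X) : Finset X :=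
  Finset.univ.filter (fun x => x ∉ S ∧ Indep (insert x S))

/-- The parallel class of `x ∈ Cnt(S)`:  the set of continuations `y` with `y ∼_S x`,
i.e. `y = x` or `S ∪ {x,y}` is not independent. -/
def mParClass (Indep : Finset X → Prop) (S : Finset X) (x : X) : Finset X :=
  (mCont Indep S).filter (fun y => y = x ∨ ¬ Indep (insert y (insert x S)))

/-- The set `Par(S)` of parallel classes of `S`. -/
def mParClasses (Indep : Finset X → Prop) (S : Finset X) : Finset (Finset X) :=
  (mCont Indep S).image (mParClass Indep S)

/-- The `k`-continuation number `p(k)`: the maximal number of parallel classes of an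
independent set of size `k`. -/
def contNum (Indep : Finset X → Prop) (k : ℕ) : ℕ :=
  (Finset.univ.filter (fun S : Finset X => Indep S ∧ S.card = k)).sup
    (fun S => (mParClasses Indep S).card)

/-!
Let `F j` be the generating polynomial of the independent sets of size `j`, let `k = r + 1`,
`n = |X|` and `θ = 1 + 1 / (n - k)`, and consider the polynomial
`P = θ t² F r / 2 + t F (r + 1) + F (r + 2)`. The Hessian of every derivative `∂ₛ P` with
`|s| ≤ r`, taken at `t = 0` and `x = ω`, satisfies the reverse Cauchy–Schwarz inequality in the
direction `w = (0, ω)`. For `|s| = r` this is an explicit computation with the parallel classes of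
continuations of `s`, of which there are at most `n - r`. By Euler's identity, a Hessian with
`|s| < r` is a weighted sum of the Hessians of the derivatives of `∂ₛ P`, and the inequality passes
to it by solving a Poisson equation on the graph of compatible continuations.

For `s = ∅`, the inequality applied to the unit vector `e` in direction `t` is the log-concavity
inequality of the theorem. If it is an equality, then `e - c w` lies in the kernel of the Hessian
for some `c > 0`. Such a kernel vector is isotropic for the Hessians of all first derivatives, hence
is in their kernels, and so on down to every independent `S` of size `r`. There it says that the
scaled weights `c ω` of the continuations of `S` add up to `θ`, and those of each parallel class to
`θ - 1`. Since `(n - r) (θ - 1) = θ`, this forces all elements outside `S` to be pairwise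
nonparallel continuations of the same weight.
-/

open Matrix

/-! ### Reverse Cauchy–Schwarz forms -/

section ReverseCauchySchwarz

variable {V : Type*} [AddCommGroup V] [Module ℝ V] {B : LinearMap.BilinForm ℝ V}

/-- The reverse Cauchy–Schwarz inequality in the direction `w`, known in the combinatorial atlas
method as hyperbolicity. With the convention `x / 0 = 0`, the case `B w w = 0` says that `B` is
negative semidefinite, so that the zero form is included. -/
def ReverseCauchySchwarz (B : LinearMap.BilinForm ℝ V) (w : V) : Prop :=
  ∀ u, B u u ≤ B u w ^ 2 / B w w

namespace ReverseCauchySchwarz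

theorem of_nonpos_orthogonal (hB : B.IsSymm) {e w : V} (hw : 0 < B w w)
    (he : ∀ u, B u e = 0 → B u u ≤ 0) : ReverseCauchySchwarz B w := by
  intro u
  have hwe : B w e ≠ 0 := fun h => (he w h).not_gt hw
  have horth : B (B w e • u - B u e • w) e = 0 := by
    simp only [map_sub, map_smul, LinearMap.sub_apply, LinearMap.smul_apply, smul_eq_mul]
    ring
  have hv := he _ horth
  have hdiscrim : B w e ^ 2 * B u u + B u e ^ 2 * B w w ≤ 2 * B w e * B u e * B u w := by
    simp only [map_sub, map_smul, LinearMap.sub_apply, LinearMap.smul_apply, smul_eq_mul,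
      hB.eq w u] at hv
    linarith
  rw [le_div_iff₀ hw]
  refine le_of_mul_le_mul_left ?_ (by positivity : 0 < B w e ^ 2)
  nlinarith [sq_nonneg (B u e * B w w - B w e * B u w)]

theorem apply_eq_zero_of_isotropic (hB : B.IsSymm) {w v : V} (h : ReverseCauchySchwarz B w)
    (hvw : B v w = 0) (hvv : B v v = 0) (z : V) : B z v = 0 := by
  have hline : ∀ t : ℝ, 0 ≤ 0 * (t * t) + (-2 * B z v) * t + (B z w ^ 2 / B w w - B z z) := by
    intro t
    have := h (z + t • v)
    simp only [map_add, map_smul, LinearMap.add_apply, LinearMap.smul_apply, smul_eq_mul,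
      hB.eq v z, hvw, hvv, mul_zero, add_zero] at this
    linarith
  have := discrim_le_zero hline
  rw [discrim] at this
  nlinarith [sq_nonneg (B z v)]

theorem apply_sub_smul_eq_zero (hB : B.IsSymm) {e w : V} (h : ReverseCauchySchwarz B w)
    (hw : B w w ≠ 0) (heq : B e e * B w w = B e w ^ 2) (z : V) :
    B z (e - (B e w / B w w) • w) = 0 := by
  refine h.apply_eq_zero_of_isotropic hB ?_ ?_ z
  · simp [hw]
  · simp only [map_sub, map_smul, LinearMap.sub_apply, LinearMap.smul_apply, smul_eq_mul,
      hB.eq w e]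
    field_simp
    linarith

end ReverseCauchySchwarz

end ReverseCauchySchwarz

/-! ### The Laplacian of a weighted graph -/

section Laplacian

variable {ι : Type*} [Fintype ι]

theorem exists_mulVec_eq_of_isSymm {K : Matrix ι ι ℝ} (hK : K.IsSymm) {b : ι → ℝ}
    (hb : ∀ q, K *ᵥ q = 0 → b ⬝ᵥ q = 0) : ∃ y, K *ᵥ y = b := by
  have hsymm : (toEuclideanLin K).IsSymmetric := by
    rwa [isSymmetric_toEuclideanLin_iff, IsHermitian, conjTranspose_eq_transpose_of_trivial]
  have hmem : WithLp.toLp 2 b ∈ LinearMap.range (toEuclideanLin K) := by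
    rw [← Submodule.orthogonal_orthogonal (LinearMap.range (toEuclideanLin K)),
      hsymm.orthogonal_range, Submodule.mem_orthogonal]
    intro q hq
    simpa [EuclideanSpace.inner_eq_star_dotProduct] using
      hb q.ofLp (by simpa using congrArg WithLp.ofLp (LinearMap.mem_ker.1 hq))
  obtain ⟨y, hy⟩ := hmem
  exact ⟨y.ofLp, by simpa using congrArg WithLp.ofLp hy⟩

variable [DecidableEq ι]

/-- The Laplacian matrix of the weighted graph on `ι` whose edge `{i, j}` has weight `C i j`. -/
def weightedLaplacian (C : Matrix ι ι ℝ) : Matrix ι ι ℝ :=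
  diagonal (fun i => ∑ j, C i j) - C

variable {C : Matrix ι ι ℝ}

theorem isSymm_weightedLaplacian (hC : C.IsSymm) : (weightedLaplacian C).IsSymm :=
  (isSymm_diagonal _).sub hC

theorem weightedLaplacian_mulVec (z : ι → ℝ) (i : ι) :
    (weightedLaplacian C *ᵥ z) i = ∑ j, C i j * (z i - z j) := by
  rw [weightedLaplacian, sub_mulVec, Pi.sub_apply, mulVec_diagonal]
  simp only [mul_sub, Finset.sum_sub_distrib, Finset.sum_mul, mulVec, dotProduct]

theorem dotProduct_weightedLaplacian_mulVec (hC : C.IsSymm) (z : ι → ℝ) :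
    z ⬝ᵥ weightedLaplacian C *ᵥ z = (∑ i, ∑ j, C i j * (z i - z j) ^ 2) / 2 := by
  have hswap : ∑ i, ∑ j, C i j * (z i - z j) * z j = -∑ i, ∑ j, C i j * (z i - z j) * z i := by
    rw [Finset.sum_comm]
    simp only [← Finset.sum_neg_distrib]
    exact Finset.sum_congr rfl fun i _ => Finset.sum_congr rfl fun j _ => by
      rw [hC.apply]; ring
  have hsplit : ∑ i, ∑ j, C i j * (z i - z j) ^ 2 =
      ∑ i, ∑ j, C i j * (z i - z j) * z i - ∑ i, ∑ j, C i j * (z i - z j) * z j := by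
    simp only [← Finset.sum_sub_distrib]
    exact Finset.sum_congr rfl fun i _ => Finset.sum_congr rfl fun j _ => by ring
  rw [hsplit, hswap]
  simp only [dotProduct, weightedLaplacian_mulVec, Finset.mul_sum]
  simp only [mul_comm (z _)]
  ring

theorem dotProduct_weightedLaplacian_mulVec_nonneg (hC : C.IsSymm) (hC0 : ∀ i j, 0 ≤ C i j)
    (z : ι → ℝ) : 0 ≤ z ⬝ᵥ weightedLaplacian C *ᵥ z := by
  rw [dotProduct_weightedLaplacian_mulVec hC]
  exact div_nonneg (Finset.sum_nonneg fun i _ => Finset.sum_nonneg fun j _ =>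
    mul_nonneg (hC0 i j) (sq_nonneg _)) zero_le_two

theorem exists_weightedLaplacian_mulVec_eq (hC : C.IsSymm) (hC0 : ∀ i j, 0 ≤ C i j) {f : ι → ℝ}
    (hf : ∀ q : ι → ℝ, (∀ i j, C i j ≠ 0 → q i = q j) → f ⬝ᵥ q = 0) :
    ∃ z, weightedLaplacian C *ᵥ z = f := by
  refine exists_mulVec_eq_of_isSymm (isSymm_weightedLaplacian hC) fun q hq =>
    hf q fun i j hij => ?_
  have henergy : ∑ i, ∑ j, C i j * (q i - q j) ^ 2 = 0 := by
    have := dotProduct_weightedLaplacian_mulVec hC q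
    rw [hq, dotProduct_zero] at this
    linarith
  have hterm : ∀ i j, 0 ≤ C i j * (q i - q j) ^ 2 := fun i j => mul_nonneg (hC0 i j) (sq_nonneg _)
  have hrow := (Finset.sum_eq_zero_iff_of_nonneg fun i _ =>
    Finset.sum_nonneg fun j _ => hterm i j).1 henergy i (Finset.mem_univ i)
  have := (Finset.sum_eq_zero_iff_of_nonneg fun j _ => hterm i j).1 hrow j (Finset.mem_univ j)
  exact sub_eq_zero.1 (pow_eq_zero_iff two_ne_zero |>.1 ((mul_eq_zero.1 this).resolve_left hij))

end Laplacian

section LocalToGlobal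

variable {V ι : Type*} [AddCommGroup V] [Module ℝ V] [Fintype ι]
  {B : LinearMap.BilinForm ℝ V} {e : ι → V} {p : ι → ℝ}

theorem bilinForm_sum_smul_left (a : ι → ℝ) (v : V) :
    B (∑ i, a i • e i) v = ∑ i, a i * B (e i) v := by
  simp [map_sum, LinearMap.sum_apply]

-- The balance equation is the Poisson equation `L z = f` for the graph with edge weights
-- `pᵢ pⱼ B(eᵢ, eⱼ)` and the load `fᵢ = pᵢ B(eᵢ, u)`, whose total is `B(w, u) = 0`.
theorem exists_balancing_coefficients (hB : B.IsSymm) (hp : ∀ i, 0 < p i)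
    (hnonneg : ∀ i j, 0 ≤ B (e i) (e j))
    (hconn : ∀ q : ι → ℝ, (∀ i j, B (e i) (e j) ≠ 0 → q i = q j) →
      ∃ c, ∀ i, B (e i) ≠ 0 → q i = c)
    {u : V} (hu : B u (∑ i, p i • e i) = 0) :
    ∃ z : ι → ℝ,
      (∀ i, B (e i) (u + ∑ j, (p j * z j) • e j) = z i * B (e i) (∑ j, p j • e j)) ∧
      0 ≤ B (∑ j, (p j * z j) • e j) u := by
  let C : Matrix ι ι ℝ := Matrix.of fun i j => p i * p j * B (e i) (e j)
  have hC : C.IsSymm := Matrix.IsSymm.ext fun i j => by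
    simp only [C, Matrix.of_apply, hB.eq (e j) (e i), mul_comm (p j)]
  have hC0 : ∀ i j, 0 ≤ C i j := fun i j =>
    mul_nonneg (mul_nonneg (hp i).le (hp j).le) (hnonneg i j)
  obtain ⟨z, hz⟩ : ∃ z, weightedLaplacian C *ᵥ z = fun i => p i * B (e i) u := by
    refine exists_weightedLaplacian_mulVec_eq hC hC0 fun q hq => ?_
    obtain ⟨c, hc⟩ := hconn q fun i j hij =>
      hq i j (mul_ne_zero (mul_ne_zero (hp i).ne' (hp j).ne') hij)
    have hterm : ∀ i, p i * B (e i) u * q i = c * (p i * B (e i) u) := by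
      intro i
      by_cases hi : B (e i) = 0
      · simp [hi]
      · rw [hc i hi, mul_comm]
    simp only [dotProduct, hterm]
    rw [← Finset.mul_sum, ← bilinForm_sum_smul_left, hB.eq, hu, mul_zero]
  refine ⟨z, fun i => ?_, ?_⟩
  · have hi := congrFun hz i
    have hfactor : (weightedLaplacian C *ᵥ z) i =
        p i * (z i * B (e i) (∑ j, p j • e j) - B (e i) (∑ j, (p j * z j) • e j)) := by
      rw [weightedLaplacian_mulVec]
      simp only [map_sum, map_smul, smul_eq_mul, C, Matrix.of_apply]
      rw [Finset.mul_sum, ← Finset.sum_sub_distrib, Finset.mul_sum]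
      exact Finset.sum_congr rfl fun j _ => by ring
    rw [map_add]
    linarith [mul_left_cancel₀ (hp i).ne' (hfactor.symm.trans hi)]
  · have henergy : B (∑ j, (p j * z j) • e j) u = z ⬝ᵥ weightedLaplacian C *ᵥ z := by
      rw [hz, bilinForm_sum_smul_left]
      exact Finset.sum_congr rfl fun i _ => by ring
    rw [henergy]
    exact dotProduct_weightedLaplacian_mulVec_nonneg hC hC0 z

theorem ReverseCauchySchwarz.of_forall_le_sum (hB : B.IsSymm) (hp : ∀ i, 0 < p i)
    (hnonneg : ∀ i j, 0 ≤ B (e i) (e j))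
    (hconn : ∀ q : ι → ℝ, (∀ i j, B (e i) (e j) ≠ 0 → q i = q j) →
      ∃ c, ∀ i, B (e i) ≠ 0 → q i = c)
    (hpos : 0 < B (∑ i, p i • e i) (∑ i, p i • e i))
    (hle : ∀ u, B u u ≤ ∑ i, p i * (B (e i) u ^ 2 / B (e i) (∑ j, p j • e j))) :
    ReverseCauchySchwarz B (∑ i, p i • e i) := by
  refine .of_nonpos_orthogonal hB (e := ∑ i, p i • e i) hpos fun u hu => ?_
  obtain ⟨z, hbalance, hload⟩ := exists_balancing_coefficients hB hp hnonneg hconn hu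
  have hstep := hle (u + ∑ j, (p j * z j) • e j)
  have hright : ∑ i, p i * (B (e i) (u + ∑ j, (p j * z j) • e j) ^ 2 /
      B (e i) (∑ j, p j • e j)) =
      B (∑ j, (p j * z j) • e j) (u + ∑ j, (p j * z j) • e j) := by
    rw [bilinForm_sum_smul_left]
    refine Finset.sum_congr rfl fun i _ => ?_
    rw [hbalance]
    by_cases hi : B (e i) (∑ j, p j • e j) = 0
    · simp [hi]
    · field_simp
  rw [hright] at hstep
  generalize ∑ j, (p j * z j) • e j = x at hstep hload
  simp only [map_add, LinearMap.add_apply, hB.eq u x] at hstep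
  linarith

end LocalToGlobal

/-! ### Derivatives of the independence polynomial -/

section DerivWeight

theorem cons_le_iff_mem_sub {α : Type*} [DecidableEq α] {s t : Multiset α} {z : α} (hs : s ≤ t) :
    z ::ₘ s ≤ t ↔ z ∈ t - s := by
  rw [← Multiset.singleton_add, ← le_tsub_iff_right hs, Multiset.singleton_le]

variable {Indep : Finset X → Prop} {ω : X → ℝ}

/-- The value at `ω` of the iterated partial derivative `∂ₛ` of the generating polynomial
`∑ ∏_{i ∈ U} x i` of the independent sets `U` of size `j`. It vanishes when `s` has repeated
elements, because the polynomial is multiaffine. -/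
def derivWeight (Indep : Finset X → Prop) (ω : X → ℝ) (s : Multiset X) (j : ℕ) : ℝ :=
  ∑ U : Finset X with Indep U ∧ U.card = j ∧ s ≤ U.val, ((U.val - s).map ω).prod

theorem derivWeight_zero (j : ℕ) : derivWeight Indep ω 0 j = wNumIndep Indep ω j := by
  simp only [derivWeight, wNumIndep, tsub_zero, zero_le, and_true]
  rfl

theorem sum_mul_derivWeight_cons (s : Multiset X) (j : ℕ) :
    ∑ z, ω z * derivWeight Indep ω (z ::ₘ s) j = (j - s.card : ℝ) * derivWeight Indep ω s j := by
  have hswap : ∑ z, ω z * derivWeight Indep ω (z ::ₘ s) j =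
      ∑ U : Finset X with Indep U ∧ U.card = j ∧ s ≤ U.val,
        ∑ z ∈ (U.val - s).toFinset, ω z * ((U.val - z ::ₘ s).map ω).prod := by
    simp only [derivWeight, Finset.mul_sum]
    refine Finset.sum_comm' fun z U => ?_
    simp only [Finset.mem_univ, true_and, Finset.mem_filter, Multiset.mem_toFinset]
    constructor
    · rintro ⟨hU, hj, h⟩
      have hs := (Multiset.le_cons_self s z).trans h
      exact ⟨(cons_le_iff_mem_sub hs).1 h, hU, hj, hs⟩
    · rintro ⟨h, hU, hj, hs⟩
      exact ⟨hU, hj, (cons_le_iff_mem_sub hs).2 h⟩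
  rw [hswap, derivWeight, Finset.mul_sum]
  refine Finset.sum_congr rfl fun U hU => ?_
  obtain ⟨-, hj, hs⟩ := (Finset.mem_filter.1 hU).2
  have hterm : ∀ z ∈ (U.val - s).toFinset,
      ω z * ((U.val - z ::ₘ s).map ω).prod = ((U.val - s).map ω).prod := by
    intro z hz
    rw [← Multiset.singleton_add, add_comm, tsub_add_eq_tsub_tsub, Multiset.sub_singleton,
      Multiset.prod_map_erase (Multiset.mem_toFinset.1 hz)]
  have hcard : ((U.val - s).toFinset.card : ℝ) = j - s.card := by
    rw [Multiset.toFinset_card_of_nodup (Multiset.nodup_of_le tsub_le_self U.nodup),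
      Multiset.card_sub hs, Finset.card_val, hj,
      Nat.cast_sub (hj ▸ Finset.card_val U ▸ Multiset.card_le_card hs)]
  rw [Finset.sum_congr rfl hterm, Finset.sum_const, nsmul_eq_mul, hcard]

theorem derivWeight_nonneg (hω : ∀ x, 0 < ω x) (s : Multiset X) (j : ℕ) :
    0 ≤ derivWeight Indep ω s j :=
  Finset.sum_nonneg fun _ _ => Multiset.prod_nonneg fun _ h => by
    obtain ⟨x, -, rfl⟩ := Multiset.mem_map.1 h
    exact (hω x).le

theorem derivWeight_pos (hω : ∀ x, 0 < ω x) {s : Multiset X} {U : Finset X} (hU : Indep U)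
    (hs : s ≤ U.val) : 0 < derivWeight Indep ω s U.card := by
  have hprod : ∀ t : Multiset X, 0 < (t.map ω).prod := fun t =>
    Multiset.prod_pos fun _ h => by
      obtain ⟨x, -, rfl⟩ := Multiset.mem_map.1 h
      exact hω x
  exact Finset.sum_pos (fun _ _ => hprod _) ⟨U, by simp [hU, hs]⟩

theorem exists_indep_of_derivWeight_ne_zero {s : Multiset X} {j : ℕ}
    (h : derivWeight Indep ω s j ≠ 0) : ∃ U, Indep U ∧ U.card = j ∧ s ≤ U.val := by
  obtain ⟨U, hU, -⟩ := Finset.exists_ne_zero_of_sum_ne_zero h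
  exact ⟨U, (Finset.mem_filter.1 hU).2⟩

theorem derivWeight_val_card {S : Finset X} (hS : Indep S) :
    derivWeight Indep ω S.val S.card = 1 := by
  have hfilter :
      ({U | Indep U ∧ U.card = S.card ∧ S.val ≤ U.val} : Finset (Finset X)) = {S} := by
    ext U
    simp only [Finset.mem_filter, Finset.mem_univ, true_and, Finset.mem_singleton]
    constructor
    · rintro ⟨-, hc, hU⟩
      exact (Finset.eq_of_subset_of_card_le (Finset.val_le_iff.1 hU) hc.le).symm
    · rintro rfl
      exact ⟨hS, rfl, le_rfl⟩
  rw [derivWeight, hfilter, Finset.sum_singleton, tsub_self, Multiset.map_zero, Multiset.prod_zero]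

end DerivWeight

section HessianForm

variable {Indep : Finset X → Prop} {ω : X → ℝ} {θ : ℝ} {r : ℕ}

/-- With `F j` the generating polynomial of the independent sets of size `j`, this is the Hessian of
`∂ₛ (θ t² F r / 2 + t F (r + 1) + F (r + 2))` at `t = 0` and `x = ω`; the index `none` stands for
the variable `t`. -/
def hessianMatrix (Indep : Finset X → Prop) (ω : X → ℝ) (θ : ℝ) (r : ℕ) (s : Multiset X) :
    Matrix (Option X) (Option X) ℝ
  | none, none => θ * derivWeight Indep ω s r
  | none, some y => derivWeight Indep ω (y ::ₘ s) (r + 1)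
  | some y, none => derivWeight Indep ω (y ::ₘ s) (r + 1)
  | some y, some z => derivWeight Indep ω (y ::ₘ z ::ₘ s) (r + 2)

/-- The bilinear form of `hessianMatrix`. -/
def hessianForm (Indep : Finset X → Prop) (ω : X → ℝ) (θ : ℝ) (r : ℕ) (s : Multiset X) :
    LinearMap.BilinForm ℝ (Option X → ℝ) :=
  Matrix.toBilin' (hessianMatrix Indep ω θ r s)

/-- The direction `(t, x) = (0, ω)`. -/
def weightVector (ω : X → ℝ) : Option X → ℝ :=
  ∑ y, ω y • Pi.single (some y) 1

theorem hessianForm_isSymm (s : Multiset X) : (hessianForm Indep ω θ r s).IsSymm := by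
  rw [hessianForm, isSymm_toBilin'_iff_isSymm]
  refine Matrix.IsSymm.ext fun i j => ?_
  cases i <;> cases j <;> simp only [hessianMatrix, Multiset.cons_swap]

theorem hessianForm_single_single (s : Multiset X) (i j : Option X) :
    hessianForm Indep ω θ r s (Pi.single i 1) (Pi.single j 1) = hessianMatrix Indep ω θ r s i j :=
  toBilin'_single _ i j

theorem hessianForm_apply_single (s : Multiset X) (u : Option X → ℝ) (j : Option X) :
    hessianForm Indep ω θ r s u (Pi.single j 1) = ∑ i, u i * hessianMatrix Indep ω θ r s i j := by
  simp [hessianForm, toBilin'_apply', dotProduct]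

theorem hessianForm_apply_weightVector (s : Multiset X) (u : Option X → ℝ) :
    hessianForm Indep ω θ r s u (weightVector ω) =
      ∑ y, ω y * hessianForm Indep ω θ r s u (Pi.single (some y) 1) := by
  simp [weightVector, map_sum]

theorem sum_mul_hessianForm_cons (s : Multiset X) (u v : Option X → ℝ) :
    ∑ y, ω y * hessianForm Indep ω θ r (y ::ₘ s) u v =
      (r - s.card : ℝ) * hessianForm Indep ω θ r s u v := by
  have hmatrix : ∑ y, ω y • hessianMatrix Indep ω θ r (y ::ₘ s) =
      (r - s.card : ℝ) • hessianMatrix Indep ω θ r s := by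
    ext i j
    simp only [Matrix.sum_apply, Matrix.smul_apply, smul_eq_mul]
    rcases i with _ | a <;> rcases j with _ | b
    · simp only [hessianMatrix, mul_left_comm _ θ, ← Finset.mul_sum, sum_mul_derivWeight_cons]
    · simp only [hessianMatrix, Multiset.cons_swap b, sum_mul_derivWeight_cons, Multiset.card_cons]
      push_cast
      ring
    · simp only [hessianMatrix, Multiset.cons_swap a, sum_mul_derivWeight_cons, Multiset.card_cons]
      push_cast
      ring
    · have hswap : ∀ y, a ::ₘ b ::ₘ y ::ₘ s = y ::ₘ a ::ₘ b ::ₘ s := fun y => by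
        rw [Multiset.cons_swap b, Multiset.cons_swap a]
      simp only [hessianMatrix, hswap, sum_mul_derivWeight_cons, Multiset.card_cons]
      push_cast
      ring
  have := congrArg (fun M => Matrix.toBilin' M u v) hmatrix
  simpa [hessianForm, map_sum, LinearMap.sum_apply] using this

theorem hessianForm_cons_apply_weightVector (s : Multiset X) (y : X) (u : Option X → ℝ) :
    hessianForm Indep ω θ r (y ::ₘ s) u (weightVector ω) =
      (r - s.card : ℝ) * hessianForm Indep ω θ r s u (Pi.single (some y) 1) := by
  suffices (hessianForm Indep ω θ r (y ::ₘ s)).flip (weightVector ω) =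
      (r - s.card : ℝ) • (hessianForm Indep ω θ r s).flip (Pi.single (some y) 1) from
    LinearMap.congr_fun this u
  refine (Pi.basisFun ℝ (Option X)).ext fun i => ?_
  simp only [Pi.basisFun_apply, LinearMap.BilinForm.flip_apply, LinearMap.smul_apply, smul_eq_mul,
    hessianForm_apply_weightVector, hessianForm_single_single]
  rcases i with _ | a
  · simp only [hessianMatrix, sum_mul_derivWeight_cons, Multiset.card_cons]
    push_cast
    ring
  · simp only [hessianMatrix, Multiset.cons_swap a, sum_mul_derivWeight_cons, Multiset.card_cons]
    push_cast
    ring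

theorem hessianForm_single_some_weightVector (s : Multiset X) (y : X) :
    hessianForm Indep ω θ r s (Pi.single (some y) 1) (weightVector ω) =
      (r + 1 - s.card : ℝ) * derivWeight Indep ω (y ::ₘ s) (r + 2) := by
  simp only [hessianForm_apply_weightVector, hessianForm_single_single, hessianMatrix,
    Multiset.cons_swap y, sum_mul_derivWeight_cons, Multiset.card_cons]
  push_cast
  ring

theorem hessianForm_single_none_weightVector (s : Multiset X) :
    hessianForm Indep ω θ r s (Pi.single none 1) (weightVector ω) =
      (r + 1 - s.card : ℝ) * derivWeight Indep ω s (r + 1) := by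
  simp only [hessianForm_apply_weightVector, hessianForm_single_single, hessianMatrix,
    sum_mul_derivWeight_cons]
  push_cast
  ring

theorem hessianForm_weightVector_weightVector (s : Multiset X) :
    hessianForm Indep ω θ r s (weightVector ω) (weightVector ω) =
      (r + 1 - s.card : ℝ) * (r + 2 - s.card) * derivWeight Indep ω s (r + 2) := by
  simp only [hessianForm_apply_weightVector s (weightVector ω),
    (hessianForm_isSymm s).eq (weightVector ω) (Pi.single _ _),
    hessianForm_single_some_weightVector, mul_left_comm (ω _), ← Finset.mul_sum,
    sum_mul_derivWeight_cons]
  push_cast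
  ring

end HessianForm

/-! ### Continuations and parallel classes -/

section IndepFinset

variable {α : Type*} {M : Matroid α} {S T : Finset α}

/-- The set system of finite independent sets of `M`, in the form taken by `wNumIndep`. -/
abbrev indepFinset (M : Matroid α) (S : Finset α) : Prop :=
  M.Indep S

theorem indepFinset.exists_superset_card_eq (hS : indepFinset M S) (hT : indepFinset M T) {j : ℕ}
    (hSj : S.card ≤ j) (hjT : j ≤ T.card) : ∃ U, S ⊆ U ∧ indepFinset M U ∧ U.card = j := by
  induction j, hSj using Nat.le_induction with
  | base => exact ⟨S, subset_rfl, hS, rfl⟩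
  | succ j _ ih =>
    obtain ⟨U, hSU, hU, rfl⟩ := ih (by lia)
    obtain ⟨x, -, hx, hxU⟩ := hU.augment_finset hT (by lia)
    exact ⟨insert x U, hSU.trans (Finset.subset_insert x U),
      by rwa [indepFinset, Finset.coe_insert], Finset.card_insert_of_notMem hx⟩

theorem indepFinset_of_card_le [DecidableEq α] {B : Finset α} {r : ℕ} (hB : indepFinset M B)
    (hrB : r + 1 ≤ B.card)
    (h : ∀ S, indepFinset M S → S.card = r → ∀ x ∉ S, ∀ y ∉ insert x S,
      indepFinset M (insert y (insert x S))) {U : Finset α} (hU : U.card ≤ r + 2) :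
    indepFinset M U := by
  induction U using Finset.induction with
  | empty => simp [indepFinset]
  | insert y T hy ih =>
    rw [Finset.card_insert_of_notMem hy] at hU
    obtain ⟨W, hTW, hW, hWr⟩ := (ih (by lia)).exists_superset_card_eq hB (j := r + 1) (by lia) hrB
    obtain ⟨x, S, hx, rfl, hS⟩ := Finset.card_eq_succ.1 hWr
    have hSind : indepFinset M S := hW.subset (Finset.coe_subset.2 (Finset.subset_insert x S))
    suffices indepFinset M (insert y (insert x S)) from
      this.subset (Finset.coe_subset.2 (Finset.insert_subset_insert y hTW))
    by_cases hyW : y ∈ insert x S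
    · rwa [Finset.insert_eq_of_mem hyW]
    · exact h S hSind hS x hx y hyW

end IndepFinset

section Continuation

variable {M : Matroid X} {S : Finset X} {x y z : X}

theorem mem_mCont {Indep : Finset X → Prop} :
    x ∈ mCont Indep S ↔ x ∉ S ∧ Indep (insert x S) := by
  simp [mCont]

theorem mem_mCont_insert :
    x ∈ mCont (indepFinset M) (insert y S) ↔
      x ∈ mCont (indepFinset M) S \ mParClass (indepFinset M) S y := by
  have hmono : indepFinset M (insert x (insert y S)) → indepFinset M (insert x S) := fun h =>
    h.subset (Finset.coe_subset.2 (Finset.insert_subset_insert x (Finset.subset_insert y S)))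
  simp only [mParClass, Finset.mem_sdiff, Finset.mem_filter, mem_mCont, Finset.mem_insert]
  tauto

theorem mem_mParClass_iff_closure_eq (hx : x ∈ mCont (indepFinset M) S) :
    y ∈ mParClass (indepFinset M) S x ↔
      y ∈ mCont (indepFinset M) S ∧ M.closure (insert y ↑S) = M.closure (insert x ↑S) := by
  rw [mParClass, Finset.mem_filter]
  refine and_congr_right fun hy => ?_
  rw [mem_mCont, indepFinset, Finset.coe_insert] at hx hy
  have hyE : y ∈ M.E := hy.2.subset_ground (Set.mem_insert y _)
  have hSind : M.Indep S := hx.2.subset (Set.subset_insert x _)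
  have hclosure : M.closure (insert y ↑S) = M.closure (insert x ↑S) ↔
      y ∈ M.closure (insert x ↑S) := by
    refine ⟨fun h => h ▸ M.mem_closure_of_mem' (Set.mem_insert y _), fun h => ?_⟩
    exact Matroid.closure_insert_congr ⟨h, (hSind.notMem_closure_iff_of_notMem hy.1).2 hy.2⟩
  rw [hclosure, hx.2.mem_closure_iff', indepFinset, Finset.coe_insert, Finset.coe_insert,
    Set.mem_insert_iff, Finset.mem_coe]
  tauto

theorem mem_mParClass_iff_mParClass_eq (hx : x ∈ mCont (indepFinset M) S) :
    y ∈ mParClass (indepFinset M) S x ↔ y ∈ mCont (indepFinset M) S ∧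
      mParClass (indepFinset M) S y = mParClass (indepFinset M) S x := by
  constructor
  · intro h
    obtain ⟨hy, hyx⟩ := (mem_mParClass_iff_closure_eq hx).1 h
    refine ⟨hy, Finset.ext fun z => ?_⟩
    rw [mem_mParClass_iff_closure_eq hx, mem_mParClass_iff_closure_eq hy, hyx]
  · rintro ⟨hy, h⟩
    exact h ▸ (mem_mParClass_iff_closure_eq hy).2 ⟨hy, rfl⟩

theorem sum_mParClasses_sum (f : X → Finset X → ℝ) :
    ∑ P ∈ mParClasses (indepFinset M) S, ∑ y ∈ P, f y P =
      ∑ y ∈ mCont (indepFinset M) S, f y (mParClass (indepFinset M) S y) := by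
  rw [← Finset.sum_fiberwise_of_maps_to (g := mParClass (indepFinset M) S)
    fun y hy => Finset.mem_image_of_mem _ hy]
  refine Finset.sum_congr rfl fun P hP => ?_
  obtain ⟨x, hx, rfl⟩ := Finset.mem_image.1 hP
  have hfiber : mParClass (indepFinset M) S x = (mCont (indepFinset M) S).filter
      (fun y => mParClass (indepFinset M) S y = mParClass (indepFinset M) S x) := by
    ext y
    rw [Finset.mem_filter, mem_mParClass_iff_mParClass_eq hx]
  rw [← hfiber]
  exact Finset.sum_congr rfl fun y hy => by rw [((mem_mParClass_iff_mParClass_eq hx).1 hy).2]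

theorem sum_mul_sum_mParClass (f : X → ℝ) :
    ∑ y ∈ mCont (indepFinset M) S, f y * ∑ z ∈ mParClass (indepFinset M) S y, f z =
      ∑ P ∈ mParClasses (indepFinset M) S, (∑ y ∈ P, f y) ^ 2 := by
  rw [← sum_mParClasses_sum fun y P => f y * ∑ z ∈ P, f z]
  simp only [← Finset.sum_mul, ← sq]

theorem sq_sum_mCont_le (f : X → ℝ) :
    (∑ y ∈ mCont (indepFinset M) S, f y) ^ 2 ≤ (mParClasses (indepFinset M) S).card *
      ∑ y ∈ mCont (indepFinset M) S, f y * ∑ z ∈ mParClass (indepFinset M) S y, f z := by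
  rw [sum_mul_sum_mParClass, ← sum_mParClasses_sum fun y _ => f y]
  exact sq_sum_le_card_mul_sum_sq

theorem exists_forall_mCont_eq {B : Finset X} (hB : indepFinset M B)
    (hSB : S.card + 1 < B.card) {q : X → ℝ}
    (hq : ∀ y z, z ∉ S → y ∉ insert z S → indepFinset M (insert y (insert z S)) → q y = q z) :
    ∃ c, ∀ y ∈ mCont (indepFinset M) S, q y = c := by
  rcases (mCont (indepFinset M) S).eq_empty_or_nonempty with hempty | ⟨x, hx⟩
  · exact ⟨0, by simp [hempty]⟩
  refine ⟨q x, fun y hy => ?_⟩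
  by_cases hpar : y ∈ mParClass (indepFinset M) S x
  · have hclosure := ((mem_mParClass_iff_closure_eq hx).1 hpar).2
    obtain ⟨hxS, hxind⟩ := mem_mCont.1 hx
    obtain ⟨v, -, hv, hvind⟩ := hxind.augment_finset hB (by rwa [Finset.card_insert_of_notMem hxS])
    have hvE : v ∈ M.E := hvind.subset_ground (Set.mem_insert v _)
    have hvy : M.Indep (insert v ↑(insert y S)) ∧ v ∉ (↑(insert y S) : Set X) := by
      rw [← (mem_mCont.1 hy).2.notMem_closure_iff hvE, Finset.coe_insert, hclosure,
        ← Finset.coe_insert]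
      exact (hxind.notMem_closure_iff hvE).2 ⟨hvind, Finset.mem_coe.not.2 hv⟩
    rw [← Finset.coe_insert] at hvind hvy
    exact (hq v y (mem_mCont.1 hy).1 hvy.2 hvy.1).symm.trans (hq v x hxS hv hvind)
  · simp only [mParClass, Finset.mem_filter, hy, true_and, not_or, not_not] at hpar
    exact hq y x (mem_mCont.1 hx).1 (by simp [hpar.1, (mem_mCont.1 hy).1]) hpar.2

end Continuation

/-! ### The reverse Cauchy–Schwarz inequality for matroids -/

section Matroid

variable {M : Matroid X} {ω : X → ℝ} {θ : ℝ} {r : ℕ} {S B : Finset X}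

theorem exists_eq_val_of_derivWeight_ne_zero {s t : Multiset X} {j : ℕ}
    (h : derivWeight (indepFinset M) ω t j ≠ 0) (hst : s ≤ t) :
    ∃ S, indepFinset M S ∧ s = S.val := by
  obtain ⟨U, hU, -, ht⟩ := exists_indep_of_derivWeight_ne_zero h
  exact ⟨⟨s, Multiset.nodup_of_le (hst.trans ht) U.nodup⟩,
    hU.subset (Finset.coe_subset.2 (Finset.val_le_iff.1 (hst.trans ht))), rfl⟩

theorem mem_mCont_of_derivWeight_ne_zero {t : Multiset X} {j : ℕ} {y : X}
    (h : derivWeight (indepFinset M) ω t j ≠ 0) (hyt : y ::ₘ S.val ≤ t) :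
    y ∈ mCont (indepFinset M) S := by
  obtain ⟨T, hT, hyT⟩ := exists_eq_val_of_derivWeight_ne_zero h hyt
  have hyS : y ∉ S := (Multiset.nodup_cons.1 (hyT ▸ T.nodup)).1
  rw [← Finset.insert_val_of_notMem hyS, Finset.val_inj] at hyT
  exact mem_mCont.2 ⟨hyS, hyT ▸ hT⟩

theorem derivWeight_val_pos (hω : ∀ x, 0 < ω x) (hS : indepFinset M S) (hB : indepFinset M B)
    {j : ℕ} (hSj : S.card ≤ j) (hjB : j ≤ B.card) :
    0 < derivWeight (indepFinset M) ω S.val j := by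
  obtain ⟨U, hSU, hU, rfl⟩ := hS.exists_superset_card_eq hB hSj hjB
  exact derivWeight_pos hω hU (Finset.val_le_iff.2 hSU)

theorem derivWeight_cons_val (hr : S.card = r) (y : X) :
    derivWeight (indepFinset M) ω (y ::ₘ S.val) (r + 1) =
      if y ∈ mCont (indepFinset M) S then 1 else 0 := by
  split_ifs with h
  · obtain ⟨hyS, hy⟩ := mem_mCont.1 h
    rw [← Finset.insert_val_of_notMem hyS, ← hr, ← Finset.card_insert_of_notMem hyS,
      derivWeight_val_card hy]
  · exact not_not.1 fun hne => h (mem_mCont_of_derivWeight_ne_zero hne le_rfl)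

theorem derivWeight_cons_cons_val (hr : S.card = r) (y z : X) :
    derivWeight (indepFinset M) ω (y ::ₘ z ::ₘ S.val) (r + 2) =
      if z ∈ mCont (indepFinset M) S ∧
        y ∈ mCont (indepFinset M) S \ mParClass (indepFinset M) S z then 1 else 0 := by
  by_cases hz : z ∈ mCont (indepFinset M) S
  · obtain ⟨hzS, -⟩ := mem_mCont.1 hz
    have hcard : (insert z S).card = r + 1 := by rw [Finset.card_insert_of_notMem hzS, hr]
    rw [← Finset.insert_val_of_notMem hzS, derivWeight_cons_val hcard]
    simp only [mem_mCont_insert, hz, true_and]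
  · rw [if_neg fun h => hz h.1]
    exact not_not.1 fun hne => hz (mem_mCont_of_derivWeight_ne_zero hne (Multiset.le_cons_self _ y))

theorem hessianForm_single_some_eq_zero {z : X} (hz : z ∉ mCont (indepFinset M) S) :
    hessianForm (indepFinset M) ω θ r S.val (Pi.single (some z) 1) = 0 := by
  have hzero : ∀ (t : Multiset X) (j : ℕ), z ::ₘ S.val ≤ t →
      derivWeight (indepFinset M) ω t j = 0 := fun t j ht =>
    not_not.1 fun hne => hz (mem_mCont_of_derivWeight_ne_zero hne ht)
  refine (Pi.basisFun ℝ (Option X)).ext fun i => ?_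
  rw [Pi.basisFun_apply, hessianForm_single_single, LinearMap.zero_apply]
  rcases i with _ | y
  · exact hzero _ _ le_rfl
  · exact hzero _ _ (Multiset.cons_le_cons z (Multiset.le_cons_self _ y))

theorem hessianForm_apply_single_none (hS : indepFinset M S) (hr : S.card = r)
    (u : Option X → ℝ) :
    hessianForm (indepFinset M) ω θ r S.val u (Pi.single none 1) =
      θ * u none + ∑ y ∈ mCont (indepFinset M) S, u (some y) := by
  subst hr
  simp only [hessianForm_apply_single, Fintype.sum_option, hessianMatrix, derivWeight_val_card hS,
    derivWeight_cons_val, mul_ite, mul_one, mul_zero, Finset.sum_ite_mem, Finset.univ_inter]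
  rw [mul_comm]

theorem hessianForm_apply_single_some (hr : S.card = r) {z : X}
    (hz : z ∈ mCont (indepFinset M) S) (u : Option X → ℝ) :
    hessianForm (indepFinset M) ω θ r S.val u (Pi.single (some z) 1) =
      u none + ∑ y ∈ mCont (indepFinset M) S, u (some y) -
        ∑ y ∈ mParClass (indepFinset M) S z, u (some y) := by
  have hsub : mParClass (indepFinset M) S z ⊆ mCont (indepFinset M) S := Finset.filter_subset _ _
  rw [add_sub_assoc, ← Finset.sum_sdiff_eq_sub hsub]
  simp only [hessianForm_apply_single, Fintype.sum_option, hessianMatrix, derivWeight_cons_val hr,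
    derivWeight_cons_cons_val hr, hz, true_and, if_true, mul_ite, mul_one, mul_zero,
    Finset.sum_ite_mem, Finset.univ_inter]

theorem hessianForm_self (hS : indepFinset M S) (hr : S.card = r) (u : Option X → ℝ) :
    hessianForm (indepFinset M) ω θ r S.val u u =
      θ * u none ^ 2 + 2 * u none * ∑ y ∈ mCont (indepFinset M) S, u (some y) +
        (∑ y ∈ mCont (indepFinset M) S, u (some y)) ^ 2 -
        ∑ y ∈ mCont (indepFinset M) S, u (some y) *
          ∑ z ∈ mParClass (indepFinset M) S y, u (some z) := by
  have hexpand : hessianForm (indepFinset M) ω θ r S.val u u =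
      ∑ i, u i * hessianForm (indepFinset M) ω θ r S.val u (Pi.single i 1) := by
    refine (congrArg _ (pi_eq_sum_univ' u)).trans ?_
    simp only [map_sum, map_smul, smul_eq_mul]
  have hsome : ∑ z, u (some z) * hessianForm (indepFinset M) ω θ r S.val u (Pi.single (some z) 1) =
      ∑ z ∈ mCont (indepFinset M) S, u (some z) * (u none +
        ∑ y ∈ mCont (indepFinset M) S, u (some y) -
        ∑ y ∈ mParClass (indepFinset M) S z, u (some y)) := by
    rw [← Finset.sum_subset (Finset.subset_univ (mCont (indepFinset M) S)) fun z _ hz => by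
      rw [(hessianForm_isSymm _).eq, hessianForm_single_some_eq_zero hz, LinearMap.zero_apply,
        mul_zero]]
    exact Finset.sum_congr rfl fun z hz => by rw [hessianForm_apply_single_some hr hz]
  rw [hexpand, Fintype.sum_option, hessianForm_apply_single_none hS hr, hsome]
  simp only [mul_sub, mul_add, Finset.sum_sub_distrib, Finset.sum_add_distrib, ← Finset.sum_mul]
  ring

theorem hessianForm_weightVector_weightVector_pos (hω : ∀ x, 0 < ω x) (hS : indepFinset M S)
    (hr : S.card ≤ r) (hB : indepFinset M B) (hrB : r + 2 ≤ B.card) :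
    0 < hessianForm (indepFinset M) ω θ r S.val (weightVector ω) (weightVector ω) := by
  rw [hessianForm_weightVector_weightVector, Finset.card_val]
  have hd : (0 : ℝ) ≤ r - S.card := sub_nonneg.2 (Nat.cast_le.2 hr)
  exact mul_pos (mul_pos (by linarith) (by linarith)) (derivWeight_val_pos hω hS hB (by lia) hrB)

theorem hessianForm_reverseCauchySchwarz_of_card_eq (hω : ∀ x, 0 < ω x) (hS : indepFinset M S)
    (hr : S.card = r) (hB : indepFinset M B) (hrB : r + 2 ≤ B.card) (hθ : 1 ≤ θ)
    (hcont : contNum (indepFinset M) r * (θ - 1) ≤ θ) :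
    ReverseCauchySchwarz (hessianForm (indepFinset M) ω θ r S.val) (weightVector ω) := by
  refine .of_nonpos_orthogonal (hessianForm_isSymm _) (e := Pi.single none 1)
    (hessianForm_weightVector_weightVector_pos hω hS hr.le hB hrB) fun u hu => ?_
  rw [hessianForm_apply_single_none hS hr] at hu
  rw [hessianForm_self hS hr]
  have hclasses : ((mParClasses (indepFinset M) S).card : ℝ) ≤ contNum (indepFinset M) r := by
    rw [contNum, Nat.cast_le]
    exact Finset.le_sup (f := fun S => (mParClasses (indepFinset M) S).card) (by simp [hS, hr])
  have hsq := sq_sum_mCont_le (M := M) (S := S) fun y => u (some y)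
  have hE : 0 ≤ ∑ y ∈ mCont (indepFinset M) S, u (some y) *
      ∑ z ∈ mParClass (indepFinset M) S y, u (some z) := by
    rw [sum_mul_sum_mParClass fun y => u (some y)]
    exact Finset.sum_nonneg fun P _ => sq_nonneg _
  generalize ∑ y ∈ mCont (indepFinset M) S, u (some y) *
      ∑ z ∈ mParClass (indepFinset M) S y, u (some z) = E at *
  generalize ∑ y ∈ mCont (indepFinset M) S, u (some y) = V at *
  generalize ((mParClasses (indepFinset M) S).card : ℝ) = p at *
  have hV : (θ - 1) * V ^ 2 ≤ θ * E := by
    calc (θ - 1) * V ^ 2 ≤ (θ - 1) * (p * E) := mul_le_mul_of_nonneg_left hsq (by linarith)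
      _ ≤ (θ - 1) * (contNum (indepFinset M) r * E) := by gcongr
      _ = (contNum (indepFinset M) r * (θ - 1)) * E := by ring
      _ ≤ θ * E := by gcongr
  obtain rfl : V = -(θ * u none) := by linarith
  have hθ0 : 0 < θ := by linarith
  refine nonpos_of_mul_nonpos_right ?_ hθ0
  linarith

theorem hessianForm_eq_zero {s : Multiset X} (hs : ∀ S, indepFinset M S → s ≠ S.val) :
    hessianForm (indepFinset M) ω θ r s = 0 := by
  have hzero : ∀ (t : Multiset X) (j : ℕ), s ≤ t → derivWeight (indepFinset M) ω t j = 0 := by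
    intro t j hst
    by_contra hne
    obtain ⟨S, hS, rfl⟩ := exists_eq_val_of_derivWeight_ne_zero hne hst
    exact hs S hS rfl
  have hmatrix : hessianMatrix (indepFinset M) ω θ r s = 0 := by
    ext i j
    rcases i with _ | y <;> rcases j with _ | z
    · simp only [hessianMatrix, hzero s r le_rfl, mul_zero, Matrix.zero_apply]
    · exact hzero _ _ (Multiset.le_cons_self s z)
    · exact hzero _ _ (Multiset.le_cons_self s y)
    · exact hzero _ _ ((Multiset.le_cons_self s z).trans (Multiset.le_cons_self _ y))
  rw [hessianForm, hmatrix, map_zero]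

theorem hessianForm_self_le_sum {s : Multiset X} (hω : ∀ x, 0 < ω x) (hs : s.card < r)
    (h : ∀ y, ReverseCauchySchwarz (hessianForm (indepFinset M) ω θ r (y ::ₘ s)) (weightVector ω))
    (u : Option X → ℝ) :
    hessianForm (indepFinset M) ω θ r s u u ≤
      ∑ y, ω y * (hessianForm (indepFinset M) ω θ r s (Pi.single (some y) 1) u ^ 2 /
        hessianForm (indepFinset M) ω θ r s (Pi.single (some y) 1) (weightVector ω)) := by
  have hd : (0 : ℝ) < r - s.card := sub_pos.2 (Nat.cast_lt.2 hs)
  refine le_of_mul_le_mul_left ?_ hd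
  rw [← sum_mul_hessianForm_cons, Finset.mul_sum]
  refine Finset.sum_le_sum fun y _ => ?_
  rw [mul_left_comm]
  refine mul_le_mul_of_nonneg_left ((h y u).trans_eq ?_) (hω y).le
  rw [hessianForm_cons_apply_weightVector, hessianForm_cons_apply_weightVector,
    (hessianForm_isSymm s).eq u, (hessianForm_isSymm s).eq (weightVector ω), mul_pow, sq (_ - _),
    mul_assoc, mul_div_mul_left _ _ hd.ne', mul_div_assoc]

theorem hessianForm_reverseCauchySchwarz_of_cons (hω : ∀ x, 0 < ω x) (hS : indepFinset M S)
    (hr : S.card < r) (hB : indepFinset M B) (hrB : r + 2 ≤ B.card)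
    (h : ∀ y, ReverseCauchySchwarz (hessianForm (indepFinset M) ω θ r (y ::ₘ S.val))
      (weightVector ω)) :
    ReverseCauchySchwarz (hessianForm (indepFinset M) ω θ r S.val) (weightVector ω) := by
  have hadj : ∀ y z, z ∉ S → y ∉ insert z S → indepFinset M (insert y (insert z S)) →
      hessianForm (indepFinset M) ω θ r S.val (Pi.single (some y) 1) (Pi.single (some z) 1) ≠
        0 := by
    intro y z hz hy hind
    rw [hessianForm_single_single, hessianMatrix, ← Finset.insert_val_of_notMem hz,
      ← Finset.insert_val_of_notMem hy]
    refine (derivWeight_val_pos hω hind hB ?_ hrB).ne'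
    rw [Finset.card_insert_of_notMem hy, Finset.card_insert_of_notMem hz]
    lia
  refine .of_forall_le_sum (hessianForm_isSymm _) hω (fun y z => ?_) (fun q hq => ?_) ?_
    (hessianForm_self_le_sum hω hr h)
  · rw [hessianForm_single_single]
    exact derivWeight_nonneg hω _ _
  · obtain ⟨c, hc⟩ := exists_forall_mCont_eq (S := S) hB (by lia) fun y z hz hy hind =>
      hq y z (hadj y z hz hy hind)
    exact ⟨c, fun y hy => hc y (not_not.1 (mt hessianForm_single_some_eq_zero hy))⟩
  · exact hessianForm_weightVector_weightVector_pos hω hS hr.le hB hrB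

theorem hessianForm_reverseCauchySchwarz (hω : ∀ x, 0 < ω x) (hB : indepFinset M B)
    (hrB : r + 2 ≤ B.card) (hθ : 1 ≤ θ) (hcont : contNum (indepFinset M) r * (θ - 1) ≤ θ)
    {s : Multiset X} (hs : s.card ≤ r) :
    ReverseCauchySchwarz (hessianForm (indepFinset M) ω θ r s) (weightVector ω) := by
  by_cases hindep : ∃ S, indepFinset M S ∧ s = S.val
  · obtain ⟨S, hS, rfl⟩ := hindep
    rcases hs.eq_or_lt with hr | hr
    · exact hessianForm_reverseCauchySchwarz_of_card_eq hω hS hr hB hrB hθ hcont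
    · exact hessianForm_reverseCauchySchwarz_of_cons hω hS hr hB hrB fun y =>
        hessianForm_reverseCauchySchwarz hω hB hrB hθ hcont
          (by rw [Multiset.card_cons]; exact hr)
  · rw [hessianForm_eq_zero fun S hS hs => hindep ⟨S, hS, hs⟩]
    exact fun u => by simp
termination_by r - s.card
decreasing_by
  rw [Multiset.card_cons]
  lia

end Matroid

/-! ### The equality case -/

section Kernel

variable {Indep : Finset X → Prop} {ω : X → ℝ} {θ : ℝ} {r : ℕ} {s : Multiset X} {v : Option X → ℝ}

theorem hessianForm_cons_apply_eq_zero (hω : ∀ x, 0 < ω x)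
    (h : ∀ y, ReverseCauchySchwarz (hessianForm Indep ω θ r (y ::ₘ s)) (weightVector ω))
    (hv : ∀ z, hessianForm Indep ω θ r s z v = 0) (y : X) (z : Option X → ℝ) :
    hessianForm Indep ω θ r (y ::ₘ s) z v = 0 := by
  have hvw : ∀ y, hessianForm Indep ω θ r (y ::ₘ s) v (weightVector ω) = 0 := fun y => by
    rw [hessianForm_cons_apply_weightVector, (hessianForm_isSymm s).eq, hv, mul_zero]
  have hvv : ∀ y, ω y * hessianForm Indep ω θ r (y ::ₘ s) v v ≤ 0 := fun y =>
    mul_nonpos_of_nonneg_of_nonpos (hω y).le ((h y v).trans_eq (by simp [hvw]))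
  have hsum : ∑ y, ω y * hessianForm Indep ω θ r (y ::ₘ s) v v = 0 := by
    rw [sum_mul_hessianForm_cons, hv, mul_zero]
  have hy := (Finset.sum_eq_zero_iff_of_nonpos fun y _ => hvv y).1 hsum y (Finset.mem_univ y)
  exact (h y).apply_eq_zero_of_isotropic (hessianForm_isSymm _) (hvw y)
    ((mul_eq_zero.1 hy).resolve_left (hω y).ne') z

theorem hessianForm_apply_eq_zero_of_card_le (hω : ∀ x, 0 < ω x)
    (h : ∀ t : Multiset X, t.card ≤ r →
      ReverseCauchySchwarz (hessianForm Indep ω θ r t) (weightVector ω))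
    (hv : ∀ z, hessianForm Indep ω θ r 0 z v = 0) (hs : s.card ≤ r) (z : Option X → ℝ) :
    hessianForm Indep ω θ r s z v = 0 := by
  induction s using Multiset.induction generalizing z with
  | empty => exact hv z
  | cons y s ih =>
    rw [Multiset.card_cons] at hs
    exact hessianForm_cons_apply_eq_zero hω (fun x => h _ (by rwa [Multiset.card_cons]))
      (ih (by lia)) y z

theorem card_mCont_le (S : Finset X) : (mCont Indep S).card ≤ Fintype.card X - S.card := by
  rw [← Finset.card_compl]
  exact Finset.card_le_card fun x hx => Finset.mem_compl.2 (mem_mCont.1 hx).1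

theorem contNum_le (r : ℕ) : contNum Indep r ≤ Fintype.card X - r :=
  Finset.sup_le fun S hS => Finset.card_image_le.trans <| by
    obtain ⟨-, -, rfl⟩ := Finset.mem_filter.1 hS
    exact card_mCont_le S

end Kernel

section Equality

variable {M : Matroid X} {ω : X → ℝ} {θ c : ℝ} {r : ℕ} {S B : Finset X} {x y : X}

theorem single_sub_smul_weightVector_none :
    (Pi.single none 1 - c • weightVector ω : Option X → ℝ) none = 1 := by
  simp [weightVector]

theorem single_sub_smul_weightVector_some :
    (Pi.single none 1 - c • weightVector ω : Option X → ℝ) (some x) = -(c * ω x) := by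
  simp [weightVector, Pi.single_apply]

theorem mul_sum_mCont_of_kernel (hS : indepFinset M S) (hr : S.card = r)
    (hker : ∀ z, hessianForm (indepFinset M) ω θ r S.val z
      (Pi.single none 1 - c • weightVector ω) = 0) :
    c * ∑ y ∈ mCont (indepFinset M) S, ω y = θ := by
  have := hker (Pi.single none 1)
  rw [(hessianForm_isSymm _).eq, hessianForm_apply_single_none hS hr] at this
  simp only [single_sub_smul_weightVector_none, single_sub_smul_weightVector_some,
    Finset.sum_neg_distrib, ← Finset.mul_sum] at this
  linarith

theorem mul_sum_mParClass_of_kernel (hS : indepFinset M S) (hr : S.card = r)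
    (hker : ∀ z, hessianForm (indepFinset M) ω θ r S.val z
      (Pi.single none 1 - c • weightVector ω) = 0) (hx : x ∈ mCont (indepFinset M) S) :
    c * ∑ y ∈ mParClass (indepFinset M) S x, ω y = θ - 1 := by
  have hsum := mul_sum_mCont_of_kernel hS hr hker
  have := hker (Pi.single (some x) 1)
  rw [(hessianForm_isSymm _).eq, hessianForm_apply_single_some hr hx] at this
  simp only [single_sub_smul_weightVector_none, single_sub_smul_weightVector_some,
    Finset.sum_neg_distrib, ← Finset.mul_sum] at this
  linarith

theorem self_mem_mParClass (hx : x ∈ mCont (indepFinset M) S) :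
    x ∈ mParClass (indepFinset M) S x :=
  Finset.mem_filter.2 ⟨hx, .inl rfl⟩

-- The weights `c * ω y` of the continuations `y` of `S` sum to `θ = (n - r) (θ - 1)` and are each
-- at most `θ - 1`, so all `n - r` elements outside `S` are continuations and all bounds are tight.
theorem mem_mCont_and_weight_of_kernel (hω : ∀ x, 0 < ω x) (hS : indepFinset M S)
    (hr : S.card = r) (hc : 0 < c) (hθ : 1 < θ) (hθr : (Fintype.card X - r : ℝ) * (θ - 1) = θ)
    (hker : ∀ z, hessianForm (indepFinset M) ω θ r S.val z
      (Pi.single none 1 - c • weightVector ω) = 0) (hx : x ∉ S) :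
    x ∈ mCont (indepFinset M) S ∧ c * ω x = θ - 1 := by
  have hle : ∀ y ∈ mCont (indepFinset M) S, c * ω y ≤ θ - 1 := by
    intro y hy
    rw [← mul_sum_mParClass_of_kernel hS hr hker hy]
    gcongr
    exact Finset.single_le_sum (fun z _ => (hω z).le) (self_mem_mParClass hy)
  have hsub : mCont (indepFinset M) S ⊆ Sᶜ := fun y hy =>
    Finset.mem_compl.2 (mem_mCont.1 hy).1
  have hslack : ∑ y ∈ Sᶜ, (θ - 1 - if y ∈ mCont (indepFinset M) S then c * ω y else 0) = 0 := by
    have hcard : ((Sᶜ).card : ℝ) = Fintype.card X - r := by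
      rw [Finset.card_compl, Nat.cast_sub (Finset.card_le_univ S), hr]
    rw [Finset.sum_sub_distrib, Finset.sum_const, nsmul_eq_mul, hcard, hθr, Finset.sum_ite_mem,
      Finset.inter_eq_right.2 hsub, ← Finset.mul_sum, mul_sum_mCont_of_kernel hS hr hker, sub_self]
  have hterm := (Finset.sum_eq_zero_iff_of_nonneg fun y _ => by
    split_ifs with hy
    · exact sub_nonneg.2 (hle y hy)
    · linarith).1 hslack x (Finset.mem_compl.2 hx)
  split_ifs at hterm with hmem
  · exact ⟨hmem, by linarith⟩
  · linarith

theorem indepFinset_insert_insert_of_kernel (hω : ∀ x, 0 < ω x) (hS : indepFinset M S)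
    (hr : S.card = r) (hc : 0 < c) (hθ : 1 < θ) (hθr : (Fintype.card X - r : ℝ) * (θ - 1) = θ)
    (hker : ∀ z, hessianForm (indepFinset M) ω θ r S.val z
      (Pi.single none 1 - c • weightVector ω) = 0) (hx : x ∉ S) (hy : y ∉ insert x S) :
    indepFinset M (insert y (insert x S)) := by
  obtain ⟨hyx, hyS⟩ := not_or.1 (mt Finset.mem_insert.2 hy)
  obtain ⟨hxC, hxω⟩ := mem_mCont_and_weight_of_kernel hω hS hr hc hθ hθr hker hx
  obtain ⟨hyC, -⟩ := mem_mCont_and_weight_of_kernel hω hS hr hc hθ hθr hker hyS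
  by_contra hdep
  have hpair : {x, y} ⊆ mParClass (indepFinset M) S x :=
    Finset.insert_subset (self_mem_mParClass hxC)
      (Finset.singleton_subset_iff.2 (Finset.mem_filter.2 ⟨hyC, .inr hdep⟩))
  have hle := mul_le_mul_of_nonneg_left
    (Finset.sum_le_sum_of_subset_of_nonneg hpair fun z _ _ => (hω z).le) hc.le
  rw [mul_sum_mParClass_of_kernel hS hr hker hxC, Finset.sum_pair (Ne.symm hyx), mul_add] at hle
  linarith [mul_pos hc (hω y)]

theorem exists_forall_hessianForm_apply_eq_zero (hω : ∀ x, 0 < ω x) (hB : indepFinset M B)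
    (hrB : r + 2 ≤ B.card) (hθ : 1 < θ) (hcont : contNum (indepFinset M) r * (θ - 1) ≤ θ)
    (heq : wNumIndep (indepFinset M) ω (r + 1) ^ 2 =
      (1 + 1 / ((r : ℝ) + 1)) * θ * wNumIndep (indepFinset M) ω r *
        wNumIndep (indepFinset M) ω (r + 2)) :
    ∃ c : ℝ, 0 < c ∧ ∀ s : Multiset X, s.card ≤ r → ∀ z,
      hessianForm (indepFinset M) ω θ r s z (Pi.single none 1 - c • weightVector ω) = 0 := by
  have hRCS : ∀ s : Multiset X, s.card ≤ r →
      ReverseCauchySchwarz (hessianForm (indepFinset M) ω θ r s) (weightVector ω) := fun s =>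
    hessianForm_reverseCauchySchwarz hω hB hrB hθ.le hcont
  have hpos : ∀ j ≤ r + 2, 0 < wNumIndep (indepFinset M) ω j := fun j hj => by
    rw [← derivWeight_zero]
    exact derivWeight_val_pos (S := ∅) hω (by simp [indepFinset]) hB (by simp) (hj.trans hrB)
  have hew := hessianForm_single_none_weightVector (Indep := indepFinset M) (ω := ω) (θ := θ)
    (r := r) 0
  have hww := hessianForm_weightVector_weightVector (Indep := indepFinset M) (ω := ω) (θ := θ)
    (r := r) 0
  have hee := hessianForm_single_single (Indep := indepFinset M) (ω := ω) (θ := θ) (r := r) 0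
    none none
  simp only [hessianMatrix, derivWeight_zero, Multiset.card_zero, Nat.cast_zero, sub_zero]
    at hew hww hee
  have hww_pos : 0 < hessianForm (indepFinset M) ω θ r 0 (weightVector ω) (weightVector ω) := by
    rw [hww]
    exact mul_pos (by positivity) (hpos (r + 2) le_rfl)
  have hew_pos : 0 < hessianForm (indepFinset M) ω θ r 0 (Pi.single none 1) (weightVector ω) := by
    rw [hew]
    exact mul_pos (by positivity) (hpos (r + 1) (by lia))
  have hequality : hessianForm (indepFinset M) ω θ r 0 (Pi.single none 1) (Pi.single none 1) *
      hessianForm (indepFinset M) ω θ r 0 (weightVector ω) (weightVector ω) =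
      hessianForm (indepFinset M) ω θ r 0 (Pi.single none 1) (weightVector ω) ^ 2 := by
    rw [hew, hww, hee, mul_pow, heq]
    field_simp
    ring
  have hker := (hRCS 0 (Nat.zero_le r)).apply_sub_smul_eq_zero (hessianForm_isSymm 0) hww_pos.ne'
    hequality
  exact ⟨_, div_pos hew_pos hww_pos, fun s hs =>
    hessianForm_apply_eq_zero_of_card_le hω hRCS hker hs⟩

theorem uniform_of_wNumIndep_sq_eq {α : Type*} [Fintype α] {M : Matroid α} {ω : α → ℝ}
    {B : Finset α} (hω : ∀ x, 0 < ω x) (hB : indepFinset M B) (hrB : r + 2 ≤ B.card)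
    (heq : wNumIndep (indepFinset M) ω (r + 1) ^ 2 =
      (1 + 1 / ((r : ℝ) + 1)) * (1 + 1 / ((Fintype.card α : ℝ) - (r + 1))) *
        wNumIndep (indepFinset M) ω r * wNumIndep (indepFinset M) ω (r + 2)) :
    (∀ S : Finset α, S.card = r + 2 → indepFinset M S) ∧ ∀ x y, ω x = ω y := by
  have hn : (r : ℝ) + 2 ≤ Fintype.card α := mod_cast hrB.trans (Finset.card_le_univ B)
  have hn0 : 0 < (Fintype.card α : ℝ) - (r + 1) := by linarith
  set θ := 1 + 1 / ((Fintype.card α : ℝ) - (r + 1)) with hθ_def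
  have hθ : 1 < θ := lt_add_of_pos_right 1 (by positivity)
  have hθr : (Fintype.card α - r : ℝ) * (θ - 1) = θ := by
    rw [hθ_def]
    field_simp
    ring
  have hcont : contNum (indepFinset M) r * (θ - 1) ≤ θ := by
    have hle : (contNum (indepFinset M) r : ℝ) ≤ Fintype.card α - r := by
      rw [← Nat.cast_sub (by exact_mod_cast (by linarith : (r : ℝ) ≤ Fintype.card α))]
      exact_mod_cast contNum_le r
    exact (mul_le_mul_of_nonneg_right hle (by linarith)).trans_eq hθr
  obtain ⟨c, hc, hker⟩ := exists_forall_hessianForm_apply_eq_zero hω hB hrB hθ hcont heq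
  have hpairs : ∀ S, indepFinset M S → S.card = r → ∀ x ∉ S, ∀ y ∉ insert x S,
      indepFinset M (insert y (insert x S)) := fun S hS hr x hx y hy =>
    indepFinset_insert_insert_of_kernel hω hS hr hc hθ hθr (hker S.val hr.le) hx hy
  have hweight : ∀ x, c * ω x = θ - 1 := by
    intro x
    obtain ⟨S, hSB, hr⟩ := Finset.exists_subset_card_eq
      (show r ≤ (B.erase x).card by have := B.pred_card_le_card_erase (a := x); lia)
    have hS : indepFinset M S := hB.subset (Finset.coe_subset.2 (hSB.trans (B.erase_subset x)))
    exact (mem_mCont_and_weight_of_kernel hω hS hr hc hθ hθr (hker S.val hr.le)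
      fun hxS => B.notMem_erase x (hSB hxS)).2
  exact ⟨fun S hS => indepFinset_of_card_le hB (by lia) hpairs hS.le, fun x y =>
    mul_left_cancel₀ hc.ne' ((hweight x).trans (hweight y).symm)⟩

end Equality

section Uniform

variable {α : Type*} {Indep : Finset α → Prop}

theorem sq_choose_succ {n r : ℕ} (h : r + 1 < n) :
    (n.choose (r + 1) : ℝ) ^ 2 = (1 + 1 / ((r : ℝ) + 1)) * (1 + 1 / ((n : ℝ) - (r + 1))) *
      n.choose r * n.choose (r + 2) := by
  have hn : (0 : ℝ) < n - (r + 1) := sub_pos.2 (mod_cast h)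
  have hstep : ∀ j ≤ n, (n.choose (j + 1) : ℝ) * (j + 1) = n.choose j * ((n : ℝ) - j) := by
    intro j hj
    rw [← Nat.cast_sub hj]
    exact_mod_cast n.choose_succ_right_eq j
  have hlow := hstep r (by lia)
  have hhigh := hstep (r + 1) h.le
  push_cast at hhigh
  field_simp
  linear_combination (n.choose (r + 1) : ℝ) * ((n : ℝ) - (r + 1)) * hlow -
    (n.choose r : ℝ) * ((n : ℝ) - r) * hhigh

theorem wNumIndep_eq_choose_mul_pow [Fintype α] {ω : α → ℝ} {a : ℝ} {j : ℕ}
    (hω : ∀ x, ω x = a) (h : ∀ S : Finset α, S.card = j → Indep S) :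
    wNumIndep Indep ω j = (Fintype.card α).choose j * a ^ j := by
  have hfilter : ({S | Indep S ∧ S.card = j} : Finset (Finset α)) =
      Finset.powersetCard j Finset.univ := by
    ext S
    simpa using h S
  rw [wNumIndep, hfilter, Finset.sum_congr rfl (g := fun _ => a ^ j) fun S hS => by
    rw [Finset.prod_congr rfl fun x _ => hω x, Finset.prod_const, (Finset.mem_powersetCard.1 hS).2]]
  simp

theorem wNumIndep_sq_eq_of_uniform [Fintype α] {M : Matroid α} {ω : α → ℝ} {r : ℕ}
    (hr : r + 2 ≤ Fintype.card α) (h : ∀ S : Finset α, S.card = r + 2 → indepFinset M S)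
    (hω : ∀ x y, ω x = ω y) :
    wNumIndep (indepFinset M) ω (r + 1) ^ 2 =
      (1 + 1 / ((r : ℝ) + 1)) * (1 + 1 / ((Fintype.card α : ℝ) - (r + 1))) *
        wNumIndep (indepFinset M) ω r * wNumIndep (indepFinset M) ω (r + 2) := by
  obtain ⟨x⟩ : Nonempty α := Fintype.card_pos_iff.1 (by lia)
  have hcount : ∀ j ≤ r + 2, wNumIndep (indepFinset M) ω j =
      (Fintype.card α).choose j * ω x ^ j := fun j hj =>
    wNumIndep_eq_choose_mul_pow (fun y => hω y x) fun S hS => by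
      obtain ⟨T, hST, hT⟩ := Finset.exists_superset_card_eq (hS.trans_le hj) hr
      exact (h T hT).subset (Finset.coe_subset.2 hST)
  rw [hcount r (by lia), hcount (r + 1) (by lia), hcount (r + 2) le_rfl, mul_pow,
    sq_choose_succ hr]
  ring

theorem exists_indep_card_of_lt_matroidRk [Fintype α] {k : ℕ} (hk : k < matroidRk Indep) :
    ∃ B, Indep B ∧ k < B.card := by
  obtain ⟨B, -, hB⟩ := Finset.lt_sup_iff.1 hk
  split_ifs at hB with hind
  · exact ⟨B, hind, hB⟩
  · exact absurd hB (Nat.not_lt_zero k)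

theorem exists_matroid_indepFinset_eq [DecidableEq α]
    (h_ne : ∃ S : Finset α, Indep S)
    (h_hered : ∀ S T : Finset α, S ⊆ T → Indep T → Indep S)
    (h_exch : ∀ S T : Finset α, Indep S → Indep T → S.card < T.card →
      ∃ x ∈ T, x ∉ S ∧ Indep (insert x S)) :
    ∃ M : Matroid α, indepFinset M = Indep := by
  obtain ⟨S, hS⟩ := h_ne
  refine ⟨(IndepMatroid.ofFinset Set.univ Indep (h_hered ∅ S S.empty_subset hS)
    (fun I J hJ hIJ => h_hered I J hIJ hJ) h_exch fun _ _ => Set.subset_univ _).matroid, ?_⟩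
  ext I
  rw [indepFinset, IndepMatroid.matroid_Indep, IndepMatroid.ofFinset_indep]

end Uniform

/-- **Weighted equality conditions for log-concavity of matroids.** Equality holds in the
weighted ultra-log-concavity inequality if and only if every `(k+1)`-subset of the ground set
is independent (i.e. `girth(M) > k+1`) and the weight function is uniform. -/
theorem matroid_weighted_equality
    (Indep : Finset X → Prop)
    (h_ne : ∃ S : Finset X, Indep S)
    (h_hered : ∀ S T : Finset X, S ⊆ T → Indep T → Indep S)
    (h_exch : ∀ S T : Finset X, Indep S → Indep T → S.card < T.card →
      ∃ x ∈ T, x ∉ S ∧ Indep (insert x S))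
    (ω : X → ℝ) (hω : ∀ x, 0 < ω x)
    (k : ℕ) (hk1 : 1 ≤ k) (hk2 : k < matroidRk Indep) :
    (wNumIndep Indep ω k) ^ 2 =
        ((1 : ℝ) + 1 / (k : ℝ)) * (1 + 1 / ((Fintype.card X : ℝ) - (k : ℝ))) *
          wNumIndep Indep ω (k - 1) * wNumIndep Indep ω (k + 1) ↔
      (∀ S : Finset X, S.card = k + 1 → Indep S) ∧ (∀ x y : X, ω x = ω y) := by
  obtain ⟨M, rfl⟩ := exists_matroid_indepFinset_eq h_ne h_hered h_exch
  obtain ⟨B, hB, hkB⟩ := exists_indep_card_of_lt_matroidRk hk2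
  obtain ⟨r, rfl⟩ := Nat.exists_eq_add_of_le' hk1
  rw [Nat.cast_add_one, Nat.add_sub_cancel]
  exact ⟨uniform_of_wNumIndep_sq_eq hω hB hkB, fun h =>
    wNumIndep_sq_eq_of_uniform (hkB.trans_le (Finset.card_le_univ B)) h.1 h.2⟩
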